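/- arXiv:2001.08004 — 3 statements merged into one kernel-verified Lean document; each statement's English description precedes it below -/
import Mathlib

section
/- Let b > 0, x₀ < x₁, let w : [x₀,x₁] → ℝ be continuously differentiable, and let ŵ₀, ŵ₁ ∈ ℝ. Then −∫_{x₀}^{x₁} b w(x) w'(x) dx + b w(x₁)(w(x₁) − ŵ₁) − b ŵ₀ (w(x₀) − ŵ₀) = (b/2)(w(x₀) − ŵ₀)² + (b/2)(w(x₁) − ŵ₁)² + (b/2) ŵ₀² − (b/2) ŵ₁². -/
open Set

lemma absolutelyContinuousOnInterval_of_contDiffOn {E : Type*} [NormedAddCommGroup E]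
    [NormedSpace ℝ E] {f : ℝ → E} {a b : ℝ} (hf : ContDiffOn ℝ 1 f (uIcc a b)) :
    AbsolutelyContinuousOnInterval f a b :=
  have ⟨_, hlip⟩ := hf.exists_lipschitzOnWith one_ne_zero (convex_uIcc a b) isCompact_uIcc
  hlip.absolutelyContinuousOnInterval

lemma integral_mul_deriv_self {f : ℝ → ℝ} {a b : ℝ} (hf : AbsolutelyContinuousOnInterval f a b) :
    ∫ x in a..b, f x * deriv f x = (f b ^ 2 - f a ^ 2) / 2 := by
  have by_parts := hf.integral_mul_deriv_eq_deriv_mul hf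
  simp only [mul_comm (deriv f _)] at by_parts
  linarith

theorem stmt_10_general (b x₀ x₁ : ℝ) (w : ℝ → ℝ) (hw : AbsolutelyContinuousOnInterval w x₀ x₁)
    (wh₀ wh₁ : ℝ) :
    -(∫ x in x₀..x₁, b * w x * deriv w x)
      + b * w x₁ * (w x₁ - wh₁) - b * wh₀ * (w x₀ - wh₀)
    = b / 2 * (w x₀ - wh₀) ^ 2 + b / 2 * (w x₁ - wh₁) ^ 2
      + b / 2 * wh₀ ^ 2 - b / 2 * wh₁ ^ 2 := by
  have volume_term : ∫ x in x₀..x₁, b * w x * deriv w x = b * ((w x₁ ^ 2 - w x₀ ^ 2) / 2) := by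
    simp only [mul_assoc, intervalIntegral.integral_const_mul, integral_mul_deriv_self hw]
  rw [volume_term]
  ring

/-- Element-local semi-ellipticity identity of the hybrid dG bilinear form on an element
`[x₀,x₁]` with flow in positive direction (`b > 0`), tested with itself. -/
theorem stmt_10 (b x₀ x₁ : ℝ) (hb : 0 < b) (hx : x₀ < x₁)
    (w : ℝ → ℝ) (hw : ContDiff ℝ 1 w) (wh₀ wh₁ : ℝ) :
    -(∫ x in x₀..x₁, b * w x * deriv w x)
      + b * w x₁ * (w x₁ - wh₁) - b * wh₀ * (w x₀ - wh₀)
    = b / 2 * (w x₀ - wh₀) ^ 2 + b / 2 * (w x₁ - wh₁) ^ 2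
      + b / 2 * wh₀ ^ 2 - b / 2 * wh₁ ^ 2 :=
  stmt_10_general b x₀ x₁ w (absolutelyContinuousOnInterval_of_contDiffOn hw.contDiffOn) wh₀ wh₁
end

section
/- Let b > 0, T > 0, let a : [0,ℓ] → ℝ be continuous with a > 0, let 0 = x₀ < ⋯ < x_M = ℓ be a grid, and let u : [0,ℓ] × [0,T] → ℝ be continuously differentiable with a(x) ∂_t u + b ∂_x u = 0. Then for every t ∈ [0,T], every choice of continuously differentiable test functions w_i : [x_{i−1},x_i] → ℝ (i = 1,…,M), and every ŵ₀,…,ŵ_M ∈ ℝ with ŵ₀ = 0: Σ_{i=1}^M [ ∫_{x_{i−1}}^{x_i} a(x) ∂_t u(x,t) w_i(x) dx − ∫_{x_{i−1}}^{x_i} b u(x,t) w_i'(x) dx + b u(x_i,t)(w_i(x_i) − ŵ_i) − b u(x_{i−1},t)(w_i(x_{i−1}) − ŵ_{i−1}) ] + b u(ℓ,t) ŵ_M = 0. -/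
/-!
On each element, integration by parts against the flux `q = b u` moves the derivative off the test
function, and the equation `a ∂ₜu + ∂ₓq = 0` cancels the volume terms together with the element
traces of `w`. What is left of element `i` is `q (x i) ŵ i - q (x (i + 1)) ŵ (i + 1)`, because the
exact solution is single-valued at the nodes, and these differences telescope.
-/

section ConservationLaw

open MeasureTheory Set
open scoped Interval

variable {A : Type*} [NormedRing A] [NormedAlgebra ℝ A] [CompleteSpace A] {f q : ℝ → A}

theorem integral_mul_sub_integral_flux_mul_deriv {α β : ℝ} {w w' : ℝ → A}
    (hf : IntervalIntegrable f volume α β)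
    (hq : ∀ y ∈ [[α, β]], HasDerivWithinAt q (-f y) [[α, β]] y)
    (hw : ∀ y ∈ [[α, β]], HasDerivWithinAt w (w' y) [[α, β]] y)
    (hw' : IntervalIntegrable w' volume α β) :
    (∫ y in α..β, f y * w y) - ∫ y in α..β, q y * w' y = q α * w α - q β * w β := by
  have by_parts : ∫ y in α..β, q y * w' y =
      q β * w β - q α * w α - ∫ y in α..β, -f y * w y :=
    intervalIntegral.integral_mul_deriv_eq_deriv_mul_of_hasDerivWithinAt hq hw hf.neg hw'
  simp only [neg_mul, intervalIntegral.integral_neg] at by_parts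
  rw [by_parts]
  abel

theorem sum_hybrid_dg_residual_eq_zero {M : ℕ} {x : ℕ → ℝ} {w w' : ℕ → ℝ → A}
    (hf : ∀ i < M, IntervalIntegrable f volume (x i) (x (i + 1)))
    (hq : ∀ i < M, ∀ y ∈ [[x i, x (i + 1)]],
      HasDerivWithinAt q (-f y) [[x i, x (i + 1)]] y)
    (hw : ∀ i < M, ∀ y ∈ [[x i, x (i + 1)]],
      HasDerivWithinAt (w i) (w' i y) [[x i, x (i + 1)]] y)
    (hw' : ∀ i < M, IntervalIntegrable (w' i) volume (x i) (x (i + 1)))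
    (wh : ℕ → A) :
    (∑ i ∈ Finset.range M,
        ((∫ y in x i..x (i + 1), f y * w i y)
          - (∫ y in x i..x (i + 1), q y * w' i y)
          + q (x (i + 1)) * (w i (x (i + 1)) - wh (i + 1))
          - q (x i) * (w i (x i) - wh i)))
      + q (x M) * wh M - q (x 0) * wh 0 = 0 := by
  have element_residual : ∀ i ∈ Finset.range M,
      (∫ y in x i..x (i + 1), f y * w i y)
          - (∫ y in x i..x (i + 1), q y * w' i y)
          + q (x (i + 1)) * (w i (x (i + 1)) - wh (i + 1))
          - q (x i) * (w i (x i) - wh i)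
        = q (x i) * wh i - q (x (i + 1)) * wh (i + 1) := by
    intro i hi
    have hiM : i < M := Finset.mem_range.mp hi
    rw [integral_mul_sub_integral_flux_mul_deriv (hf i hiM) (hq i hiM) (hw i hiM) (hw' i hiM)]
    noncomm_ring
  rw [Finset.sum_congr rfl element_residual, Finset.sum_range_sub' (fun i => q (x i) * wh i)]
  abel

theorem uIcc_subset_Icc_of_forall_le_succ {α : Type*} [Lattice α] {M : ℕ} {x : ℕ → α}
    (hx : ∀ i < M, x i ≤ x (i + 1)) {i : ℕ} (hi : i < M) :
    [[x i, x (i + 1)]] ⊆ Icc (x 0) (x M) := by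
  have x_mono : MonotoneOn x (Iic M) :=
    monotoneOn_of_le_add_one ordConnected_Iic fun j _ _ hj => hx j hj
  have node_mem : ∀ j ≤ M, x j ∈ Icc (x 0) (x M) := fun j hj =>
    ⟨x_mono (Nat.zero_le M) hj (Nat.zero_le j), x_mono hj (le_refl M) hj⟩
  exact uIcc_subset_Icc (node_mem i hi.le) (node_mem (i + 1) hi)

theorem stmt_12_general (b t : ℝ) (a : ℝ → ℝ) (M : ℕ) (x : ℕ → ℝ)
    (hmono : ∀ i < M, x i ≤ x (i + 1))
    (u : ℝ → ℝ → ℝ) (hu : ContDiff ℝ 1 (fun p : ℝ × ℝ => u p.1 p.2))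
    (hpde : ∀ y ∈ Icc (x 0) (x M),
      a y * deriv (fun s => u y s) t + b * deriv (fun z => u z t) y = 0)
    (w : ℕ → ℝ → ℝ) (hw : ∀ i < M, ContDiff ℝ 1 (w i)) (wh : ℕ → ℝ) :
    (∑ i ∈ Finset.range M,
        ((∫ y in x i..x (i + 1), a y * deriv (fun s => u y s) t * w i y)
          - (∫ y in x i..x (i + 1), b * u y t * deriv (w i) y)
          + b * u (x (i + 1)) t * (w i (x (i + 1)) - wh (i + 1))
          - b * u (x i) t * (w i (x i) - wh i)))
      + b * u (x M) t * wh M - b * u (x 0) t * wh 0 = 0 := by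
  have slice_contDiff : ContDiff ℝ 1 (fun z => u z t) :=
    hu.comp (contDiff_id.prodMk contDiff_const)
  have pde_on_element : ∀ i < M, ∀ y ∈ [[x i, x (i + 1)]],
      a y * deriv (fun s => u y s) t = -(b * deriv (fun z => u z t) y) := fun i hi y hy =>
    eq_neg_of_add_eq_zero_left (hpde y (uIcc_subset_Icc_of_forall_le_succ hmono hi hy))
  refine sum_hybrid_dg_residual_eq_zero (f := fun y => a y * deriv (fun s => u y s) t)
    (q := fun y => b * u y t) (w' := fun i => deriv (w i)) ?_ ?_ ?_ ?_ wh
  · intro i hi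
    have flux_deriv_continuous : Continuous fun y => -(b * deriv (fun z => u z t) y) :=
      (continuous_const.mul (slice_contDiff.continuous_deriv le_rfl)).neg
    exact (flux_deriv_continuous.continuousOn.congr (pde_on_element i hi)).intervalIntegrable
  · intro i hi y hy
    rw [pde_on_element i hi y hy, neg_neg]
    exact ((slice_contDiff.differentiable one_ne_zero y).hasDerivAt.const_mul b).hasDerivWithinAt
  · exact fun i hi y _ => ((hw i hi).differentiable one_ne_zero y).hasDerivAt.hasDerivWithinAt
  · exact fun i hi => ((hw i hi).continuous_deriv le_rfl).intervalIntegrable _ _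

end ConservationLaw

/-- Consistency of the hybrid dG method on a single edge `[0,ℓ]` with flow in positive
direction (`b > 0`): a classical solution of `a(x) ∂ₜu + b ∂ₓu = 0`, with hybrid values
taken as its nodal traces, satisfies the discrete variational identity for all element
test functions `w i` and hybrid test values `wh` vanishing at the inflow vertex. -/
theorem stmt_12 (b ℓ T : ℝ) (hb : 0 < b) (hT : 0 < T)
    (a : ℝ → ℝ) (ha : ContinuousOn a (Set.Icc 0 ℓ))
    (hapos : ∀ y ∈ Set.Icc 0 ℓ, 0 < a y)
    (M : ℕ) (hM : 1 ≤ M) (x : ℕ → ℝ) (hx0 : x 0 = 0) (hxM : x M = ℓ)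
    (hmono : ∀ i < M, x i < x (i + 1))
    (u : ℝ → ℝ → ℝ) (hu : ContDiff ℝ 1 (fun p : ℝ × ℝ => u p.1 p.2))
    (hpde : ∀ y ∈ Set.Icc 0 ℓ, ∀ t ∈ Set.Icc 0 T,
      a y * deriv (fun s => u y s) t + b * deriv (fun z => u z t) y = 0) :
    ∀ t ∈ Set.Icc 0 T, ∀ w : ℕ → ℝ → ℝ, (∀ i < M, ContDiff ℝ 1 (w i)) →
      ∀ wh : ℕ → ℝ, wh 0 = 0 →
      (∑ i ∈ Finset.range M,
          ((∫ y in x i..x (i + 1), a y * deriv (fun s => u y s) t * w i y)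
            - (∫ y in x i..x (i + 1), b * u y t * deriv (w i) y)
            + b * u (x (i + 1)) t * (w i (x (i + 1)) - wh (i + 1))
            - b * u (x i) t * (w i (x i) - wh i)))
        + b * u ℓ t * wh M = 0 := by
  intro t ht w hw wh hwh
  subst hxM
  simpa [hwh] using stmt_12_general b t a M x (fun i hi => (hmono i hi).le) u hu
    (fun y hy => hpde y (hx0 ▸ hy) t ht) w hw wh
end

section
/- Let k ≥ 1, x₀ < x₁, and let f : [x₀,x₁] → ℝ be continuous. Then there exists a unique polynomial p of degree at most k such that p(x₁) = f(x₁) and ∫_{x₀}^{x₁} (f(x) − p(x)) q(x) dx = 0 for every polynomial q of degree at most k−1. -/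
/-!
The polynomials of degree at most `k` and the data `(p(c), q ↦ ∫ p q)`, with `q` ranging over the
polynomials of degree less than `k`, both form spaces of dimension `k + 1`, so it is enough to show
that `p` is determined by its data. If the data of `p` vanish, then `p = (X - c) s` with `s`
admissible as a test polynomial, so `∫ (x - c) s(x)² = 0`. As `x - c` has constant sign on the
interval, `s = 0`.
-/

open Polynomial Set MeasureTheory

theorem mem_degreeLT_succ_iff_natDegree_le {R : Type*} [Semiring R] {n : ℕ} {p : R[X]} :
    p ∈ degreeLT R (n + 1) ↔ p.natDegree ≤ n := by
  rw [degreeLT_succ_eq_degreeLE, mem_degreeLE, natDegree_le_iff_degree_le]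

theorem mem_degreeLT_of_X_sub_C_mul_mem {R : Type*} [Ring R] {n : ℕ} {c : R} {s : R[X]}
    (h : (X - C c) * s ∈ degreeLT R (n + 1)) : s ∈ degreeLT R n := by
  nontriviality R
  rw [mem_degreeLT, (monic_X_sub_C c).degree_mul_comm, (monic_X_sub_C c).degree_mul,
    degree_X_sub_C, Nat.cast_succ] at h
  exact mem_degreeLT.2 (lt_of_add_lt_add_right h)

theorem finrank_degreeLT (R : Type*) [Semiring R] [StrongRankCondition R] (n : ℕ) :
    Module.finrank R (degreeLT R n) = n := by
  rw [(degreeLTEquiv R n).finrank_eq, Module.finrank_fin_fun]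

section Interval

variable {a b c : ℝ} {k : ℕ}

theorem eq_zero_of_integral_mul_sq_eq_zero (hab : a < b) {w : ℝ → ℝ}
    (hw : ContinuousOn w (Icc a b)) (hw_nonneg : ∀ x ∈ Icc a b, 0 ≤ w x)
    (hw_support : (Icc a b ∩ Function.support w).Infinite) {s : ℝ[X]}
    (h : ∫ x in a..b, w x * s.eval x ^ 2 = 0) : s = 0 := by
  refine eq_zero_of_infinite_isRoot s (hw_support.mono ?_)
  rintro x ⟨hx, hwx⟩
  by_contra hsx
  have hpos : 0 < ∫ x in a..b, w x * s.eval x ^ 2 :=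
    intervalIntegral.integral_pos hab (by fun_prop)
      (fun y hy => mul_nonneg (hw_nonneg y (Ioc_subset_Icc_self hy)) (sq_nonneg _))
      ⟨x, hx, mul_pos ((hw_nonneg x hx).lt_of_ne' hwx) (sq_pos_iff.2 hsx)⟩
  exact hpos.ne' h

theorem eq_zero_of_integral_sub_mul_sq_eq_zero (hab : a < b) (hc : c ∉ Ioo a b) {s : ℝ[X]}
    (h : ∫ x in a..b, (x - c) * s.eval x ^ 2 = 0) : s = 0 := by
  have h_infinite : (Icc a b \ {c}).Infinite := (Icc_infinite hab).sdiff (finite_singleton c)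
  rw [mem_Ioo, not_and_or, not_lt, not_lt] at hc
  rcases hc with hca | hbc
  · exact eq_zero_of_integral_mul_sq_eq_zero hab (by fun_prop)
      (fun x hx => sub_nonneg.2 (hca.trans hx.1))
      (h_infinite.mono fun x hx => ⟨hx.1, sub_ne_zero.2 hx.2⟩) h
  · refine eq_zero_of_integral_mul_sq_eq_zero (w := fun x => c - x) hab (by fun_prop)
      (fun x hx => sub_nonneg.2 (hx.2.trans hbc))
      (h_infinite.mono fun x hx => ⟨hx.1, sub_ne_zero.2 (Ne.symm hx.2)⟩) ?_
    simpa only [← neg_sub _ c, neg_mul, intervalIntegral.integral_neg, neg_eq_zero] using h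

theorem eq_zero_of_eval_eq_zero_of_integral_mul_eq_zero (hab : a < b) (hc : c ∉ Ioo a b)
    {p : ℝ[X]} (hp : p ∈ degreeLT ℝ (k + 1)) (hpc : p.eval c = 0)
    (h : ∀ q ∈ degreeLT ℝ k, ∫ x in a..b, p.eval x * q.eval x = 0) : p = 0 := by
  obtain ⟨s, rfl⟩ := dvd_iff_isRoot.2 hpc
  have hs : s = 0 := by
    refine eq_zero_of_integral_sub_mul_sq_eq_zero hab hc ?_
    simpa only [eval_mul, eval_sub, eval_X, eval_C, mul_assoc, ← sq] using
      h s (mem_degreeLT_of_X_sub_C_mul_mem hp)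
  rw [hs, mul_zero]

theorem intervalIntegrable_mul_eval {f : ℝ → ℝ} (hf : IntervalIntegrable f volume a b)
    (q : ℝ[X]) : IntervalIntegrable (fun x => f x * q.eval x) volume a b :=
  hf.mul_continuousOn q.continuous.continuousOn

/-- The moment functional `q ↦ ∫ f q` of an integrable function `f` on the polynomials. -/
noncomputable def momentFunctional {f : ℝ → ℝ} (hf : IntervalIntegrable f volume a b) :
    ℝ[X] →ₗ[ℝ] ℝ where
  toFun q := ∫ x in a..b, f x * q.eval x
  map_add' q r := by
    simp only [eval_add, mul_add]
    exact intervalIntegral.integral_add (intervalIntegrable_mul_eval hf q)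
      (intervalIntegrable_mul_eval hf r)
  map_smul' t q := by
    simp only [eval_smul, smul_eq_mul, mul_left_comm _ t, intervalIntegral.integral_const_mul,
      RingHom.id_apply]

/-- The data that determine a polynomial `p` of degree at most `k`: its value at `c` and its
moments `q ↦ ∫ p q` against the polynomials `q` of degree less than `k`. The integral of `p q` is
written as the moment of `p * q` against the constant function `1`, so that linearity in `p` comes
from linearity of `momentFunctional`. -/
noncomputable def evalMomentMap (a b c : ℝ) (k : ℕ) :
    degreeLT ℝ (k + 1) →ₗ[ℝ] ℝ × Module.Dual ℝ (degreeLT ℝ k) :=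
  ((leval c).prod
    (((LinearMap.mul ℝ ℝ[X]).compr₂
      (momentFunctional (intervalIntegrable_const (a := a) (b := b) (c := (1 : ℝ))))).compl₂
        (degreeLT ℝ k).subtype)).domRestrict _

theorem evalMomentMap_eq_iff {p : degreeLT ℝ (k + 1)} {y : ℝ}
    {F : Module.Dual ℝ (degreeLT ℝ k)} :
    evalMomentMap a b c k p = (y, F) ↔
      (p : ℝ[X]).eval c = y ∧
        ∀ q : degreeLT ℝ k, ∫ x in a..b, (p : ℝ[X]).eval x * (q : ℝ[X]).eval x = F q := by
  simp [evalMomentMap, momentFunctional, LinearMap.ext_iff]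

theorem evalMomentMap_bijective (hab : a < b) (hc : c ∉ Ioo a b) (k : ℕ) :
    Function.Bijective (evalMomentMap a b c k) := by
  have (n : ℕ) : FiniteDimensional ℝ (degreeLT ℝ n) := .of_basis (degreeLT.basis ℝ n)
  have h_injective : Function.Injective (evalMomentMap a b c k) := by
    refine (injective_iff_map_eq_zero _).2 fun p hp => Subtype.ext ?_
    obtain ⟨hpc, hpq⟩ := evalMomentMap_eq_iff.1 hp
    exact eq_zero_of_eval_eq_zero_of_integral_mul_eq_zero hab hc p.2 hpc
      fun q hq => hpq ⟨q, hq⟩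
  have h_finrank : Module.finrank ℝ (degreeLT ℝ (k + 1)) =
      Module.finrank ℝ (ℝ × Module.Dual ℝ (degreeLT ℝ k)) := by
    rw [Module.finrank_prod, Module.finrank_self, Subspace.dual_finrank_eq, finrank_degreeLT,
      finrank_degreeLT, add_comm]
  exact ⟨h_injective,
    (LinearMap.injective_iff_surjective_of_finrank_eq_finrank h_finrank).1 h_injective⟩

theorem integral_sub_eval_mul_eval_eq_zero_iff {f : ℝ → ℝ}
    (hf : IntervalIntegrable f volume a b) (p q : ℝ[X]) :
    ∫ x in a..b, (f x - p.eval x) * q.eval x = 0 ↔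
      ∫ x in a..b, p.eval x * q.eval x = momentFunctional hf q := by
  simp only [sub_mul]
  rw [intervalIntegral.integral_sub (intervalIntegrable_mul_eval hf q)
    (intervalIntegrable_mul_eval (p.continuous.intervalIntegrable a b) q), sub_eq_zero, eq_comm]
  rfl

end Interval

theorem stmt_13_general (k : ℕ) {a b c : ℝ} (hab : a < b) (hc : c ∉ Ioo a b) (y : ℝ)
    {f : ℝ → ℝ} (hf : IntervalIntegrable f volume a b) :
    ∃! p : ℝ[X], p ∈ degreeLT ℝ (k + 1) ∧ p.eval c = y ∧
      ∀ q ∈ degreeLT ℝ k, ∫ x in a..b, (f x - p.eval x) * q.eval x = 0 := by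
  have h_existsUnique := (evalMomentMap_bijective hab hc k).existsUnique
    (y, (momentFunctional hf).domRestrict (degreeLT ℝ k))
  simp only [evalMomentMap_eq_iff, LinearMap.domRestrict_apply,
    ← integral_sub_eval_mul_eval_eq_zero_iff hf, Subtype.forall] at h_existsUnique
  obtain ⟨p, hp, hp_unique⟩ := h_existsUnique
  exact ⟨p, ⟨p.2, hp⟩, fun r hr => congrArg Subtype.val (hp_unique ⟨r, hr.1⟩ hr.2)⟩

/-- Well-definedness of the special projection used in the hybrid dG convergence proof:
for continuous `f` on `[x₀,x₁]` there is a unique polynomial `p` of degree at most `k`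
matching `f` at the outflow endpoint `x₁` and such that `f − p` is L²-orthogonal to all
polynomials of degree at most `k − 1`. -/
theorem stmt_13 (k : ℕ) (hk : 1 ≤ k) (x₀ x₁ : ℝ) (hx : x₀ < x₁)
    (f : ℝ → ℝ) (hf : ContinuousOn f (Set.Icc x₀ x₁)) :
    ∃! p : Polynomial ℝ, p.natDegree ≤ k ∧ Polynomial.eval x₁ p = f x₁ ∧
      ∀ q : Polynomial ℝ, q.natDegree ≤ k - 1 →
        ∫ x in x₀..x₁, (f x - Polynomial.eval x p) * Polynomial.eval x q = 0 := by
  obtain ⟨n, rfl⟩ := Nat.exists_eq_add_of_le' hk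
  simpa only [mem_degreeLT_succ_iff_natDegree_le, Nat.add_sub_cancel] using
    stmt_13_general (n + 1) hx right_notMem_Ioo (f x₁) (hf.intervalIntegrable_of_Icc hx.le)
end
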